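/- Let Ω be a nonempty set, let (X, ≿) be a de Finetti coherent comparative prevision system on Ω with X containing all constant gambles, and let Y be a family of bounded gambles with X ⊆ Y. Then there is a binary relation ≿′ on Y such that (Y, ≿′) is a de Finetti coherent comparative prevision system extending (X, ≿) (≿ ⊆ ≿′ and the asymmetric part of ≿ is contained in the asymmetric part of ≿′). -/

import Mathlib

/-- A gamble is bounded if its range lies in some interval `[-n, n]`. -/
def Bounded {Ω : Type*} (f : Ω → ℝ) : Prop :=
  ∃ n : ℕ, ∀ ω, f ω ∈ Set.Icc (-(n : ℝ)) (n : ℝ)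

/-- `f` uniformly dominates `g`: `g + c ≤ f` pointwise for some real `c > 0`. -/
def UniformlyDominates {Ω : Type*} (f g : Ω → ℝ) : Prop :=
  ∃ c : ℝ, 0 < c ∧ ∀ ω, g ω + c ≤ f ω

/-- De Finetti coherence (coherence with respect to uniform dominance) of the comparative
expectation system `(X, pref)`. -/
def DeFinettiCoherent {Ω : Type*} (X : Set (Ω → ℝ))
    (pref : (Ω → ℝ) → (Ω → ℝ) → Prop) : Prop :=
  ¬ ∃ (n : ℕ) (f g : Fin n → Ω → ℝ) (c : Fin n → ℝ),
      1 ≤ n ∧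
      (∀ i, f i ∈ X) ∧ (∀ i, g i ∈ X) ∧ (∀ i, 0 < c i) ∧
      (∀ i, pref (f i) (g i)) ∧
      (∀ ω, (∑ i, c i * f i ω) ≤ ∑ i, c i * g i ω) ∧
      ((∃ k, ¬ pref (g k) (f k)) ∨
        UniformlyDominates (fun ω => ∑ i, c i * g i ω) (fun ω => ∑ i, c i * f i ω))

/-- A comparative prevision system: all gambles bounded, the relation complete, and every
gamble indifferent to some constant gamble in the system. -/
def IsComparativePrevisionSystem {Ω : Type*} (X : Set (Ω → ℝ))
    (pref : (Ω → ℝ) → (Ω → ℝ) → Prop) : Prop :=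
  (∀ f ∈ X, Bounded f) ∧
  (∀ f g : Ω → ℝ, f ∈ X → g ∈ X → pref f g ∨ pref g f) ∧
  (∀ f ∈ X, ∃ p : ℝ, (fun _ => p) ∈ X ∧ pref f (fun _ => p) ∧ pref (fun _ => p) f)

/-!
The differences `f - g` with `f ≿ g` generate a convex cone, and coherence says that no member of
this cone is uniformly negative. The M. Riesz extension theorem therefore provides a linear
prevision `M` that is nonnegative on the cone, and the extension ranks `Y` by the values of `M`.
A strict preference `f ≻ g` cannot be lost: every gamble of `X` is indifferent to its prevision, so
`M f = M g` would close the cycle `f ≿ g ≿ M g = M f ≿ f`, around which coherence forces `g ≿ f`.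
-/

open scoped ENNReal

section ConeExtension

variable {E : Type*} [AddCommGroup E] [Module ℝ E]

theorem exists_linearMap_eq_one_and_nonneg_of_mem_cone (K : PointedCone ℝ E) (e : E)
    (he : ∀ x, ∃ r : ℝ, r • e + x ∈ K) (hK : ∀ r : ℝ, r • e ∈ K → 0 ≤ r) :
    ∃ φ : E →ₗ[ℝ] ℝ, φ e = 1 ∧ ∀ x ∈ K, 0 ≤ φ x := by
  have he0 : e ≠ 0 := by
    rintro rfl
    linarith [hK (-1) (by simp only [smul_zero, zero_mem])]
  let F : E →ₗ.[ℝ] ℝ := LinearPMap.mkSpanSingleton e 1 he0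
  have hF (r : ℝ) (h : r • e ∈ F.domain) : F ⟨r • e, h⟩ = r :=
    (LinearPMap.mkSpanSingleton'_apply e (1 : ℝ) _ r h).trans (mul_one r)
  have hF_nonneg (x : F.domain) (hx : (x : E) ∈ K) : 0 ≤ F x := by
    obtain ⟨x, hxF⟩ := x
    obtain ⟨r, rfl⟩ := Submodule.mem_span_singleton.1 hxF
    exact (hK r hx).trans_eq (hF r hxF).symm
  have hF_dense (y : E) : ∃ x : F.domain, (x : E) + y ∈ K :=
    (he y).elim fun r hr => ⟨⟨r • e, Submodule.mem_span_singleton.2 ⟨r, rfl⟩⟩, hr⟩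
  obtain ⟨φ, hφF, hφK⟩ := riesz_extension K F hF_nonneg hF_dense
  refine ⟨φ, ?_, hφK⟩
  exact (hφF ⟨e, Submodule.mem_span_singleton_self e⟩).trans
    (LinearPMap.mkSpanSingleton_apply ℝ ℝ he0 1)

end ConeExtension

section BoundedGambles

variable {Ω : Type*}

theorem bounded_iff_memℓp_top {f : Ω → ℝ} : Bounded f ↔ Memℓp f ∞ := by
  simp only [Bounded, ← abs_le, Set.mem_Icc, memℓp_infty_iff, bddAbove_def, Set.forall_mem_range,
    Real.norm_eq_abs]
  constructor
  · rintro ⟨n, hn⟩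
    exact ⟨n, hn⟩
  · rintro ⟨r, hr⟩
    exact (exists_nat_ge r).imp fun n hn ω => (hr ω).trans hn

/-- The vector space of bounded gambles. -/
def boundedGambles (Ω : Type*) : Submodule ℝ (Ω → ℝ) where
  carrier := {f | Bounded f}
  zero_mem' := bounded_iff_memℓp_top.2 zero_memℓp
  add_mem' hf hg := bounded_iff_memℓp_top.2
    ((bounded_iff_memℓp_top.1 hf).add (bounded_iff_memℓp_top.1 hg))
  smul_mem' a _ hf := bounded_iff_memℓp_top.2 ((bounded_iff_memℓp_top.1 hf).const_smul a)

theorem Bounded.sub {f g : Ω → ℝ} (hf : Bounded f) (hg : Bounded g) : Bounded (f - g) :=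
  (boundedGambles Ω).sub_mem hf hg

theorem Bounded.sum_smul {ι : Type*} [Fintype ι] {f : ι → Ω → ℝ} (hf : ∀ i, Bounded (f i))
    (c : ι → ℝ) : Bounded (∑ i, c i • f i) :=
  (boundedGambles Ω).sum_smul_mem c fun i _ => hf i

theorem bounded_const (r : ℝ) : Bounded (fun _ : Ω => r) :=
  (exists_nat_ge |r|).imp fun _ hn _ => abs_le.1 hn

end BoundedGambles

/-- A linear prevision: a normalised linear functional that is nonnegative on nonnegative bounded
gambles. It is taken to be defined on all gambles, but its values at unbounded gambles carry no
information. -/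
structure IsLinearPrevision {Ω : Type*} (M : (Ω → ℝ) →ₗ[ℝ] ℝ) : Prop where
  map_one : M 1 = 1
  nonneg : ∀ f, Bounded f → 0 ≤ f → 0 ≤ M f

namespace IsLinearPrevision

variable {Ω : Type*} {M : (Ω → ℝ) →ₗ[ℝ] ℝ}

theorem map_const (hM : IsLinearPrevision M) (r : ℝ) : M (fun _ => r) = r :=
  calc M (fun _ => r) = M (r • 1) := congrArg M (funext fun _ => (mul_one r).symm)
    _ = r := by rw [map_smul, hM.map_one, smul_eq_mul, mul_one]

theorem mono (hM : IsLinearPrevision M) {f g : Ω → ℝ} (hf : Bounded f) (hg : Bounded g)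
    (hfg : f ≤ g) : M f ≤ M g := by
  have h := hM.nonneg (g - f) (hg.sub hf) (sub_nonneg.2 hfg)
  rwa [map_sub, sub_nonneg] at h

theorem lt_of_uniformlyDominates (hM : IsLinearPrevision M) {f g : Ω → ℝ} (hf : Bounded f)
    (hg : Bounded g) (hfg : UniformlyDominates f g) : M g < M f := by
  obtain ⟨ε, hε, hle⟩ := hfg
  have hgε : M (fun _ => ε) ≤ M (f - g) :=
    hM.mono (bounded_const ε) (hf.sub hg) fun ω => le_sub_iff_add_le'.2 (hle ω)
  rw [hM.map_const, map_sub] at hgε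
  linarith

end IsLinearPrevision

theorem exists_isLinearPrevision_nonneg_of_mem_cone {Ω : Type*} (C : PointedCone ℝ (Ω → ℝ))
    (hC : ∀ u ∈ C, ¬ UniformlyDominates 0 u) :
    ∃ M : (Ω → ℝ) →ₗ[ℝ] ℝ, IsLinearPrevision M ∧ ∀ u ∈ C, Bounded u → 0 ≤ M u := by
  let K : PointedCone ℝ (boundedGambles Ω) :=
    (C ⊔ PointedCone.positive ℝ (Ω → ℝ)).comap (boundedGambles Ω).subtype
  let one : boundedGambles Ω := ⟨1, bounded_const 1⟩
  have hK_of_nonneg (h : boundedGambles Ω) (h0 : 0 ≤ (h : Ω → ℝ)) : h ∈ K :=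
    Submodule.mem_sup_right h0
  have hone_dense (h : boundedGambles Ω) : ∃ r : ℝ, r • one + h ∈ K := by
    obtain ⟨n, hn⟩ := h.2
    refine ⟨n, hK_of_nonneg _ fun ω => ?_⟩
    simpa [one] using neg_le_iff_add_nonneg'.1 (hn ω).1
  have hone_nonneg (r : ℝ) (hr : r • one ∈ K) : 0 ≤ r := by
    obtain ⟨u, hu, p, hp, hup⟩ := Submodule.mem_sup.1 hr
    by_contra! hneg
    refine hC u hu ⟨-r, neg_pos.2 hneg, fun ω => ?_⟩
    have hω : u ω + p ω = r := by simpa [one] using congrFun hup ω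
    have hpω : 0 ≤ p ω := hp ω
    simp only [Pi.zero_apply]
    linarith
  obtain ⟨φ, hφ_one, hφ_nonneg⟩ :=
    exists_linearMap_eq_one_and_nonneg_of_mem_cone K one hone_dense hone_nonneg
  obtain ⟨M, hM⟩ := φ.exists_extend
  have hMφ (f : boundedGambles Ω) : M f = φ f := LinearMap.congr_fun hM f
  refine ⟨M, ⟨(hMφ one).trans hφ_one, fun f hf h0 => ?_⟩, fun u hu hub => ?_⟩
  · exact (hφ_nonneg ⟨f, hf⟩ (hK_of_nonneg _ h0)).trans_eq (hMφ ⟨f, hf⟩).symm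
  · exact (hφ_nonneg ⟨u, hub⟩ (Submodule.mem_sup_left hu)).trans_eq (hMφ ⟨u, hub⟩).symm

section PrevisionOrder

variable {Ω : Type*}

/-- The comparison of the gambles in `Y` by their values under `M`. -/
def previsionOrder (Y : Set (Ω → ℝ)) (M : (Ω → ℝ) →ₗ[ℝ] ℝ) (f g : Ω → ℝ) : Prop :=
  f ∈ Y ∧ g ∈ Y ∧ M g ≤ M f

variable {Y : Set (Ω → ℝ)} {M : (Ω → ℝ) →ₗ[ℝ] ℝ}

theorem isComparativePrevisionSystem_previsionOrder (hM : IsLinearPrevision M)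
    (hY : ∀ f ∈ Y, Bounded f) (hconst : ∀ c : ℝ, (fun _ => c) ∈ Y) :
    IsComparativePrevisionSystem Y (previsionOrder Y M) := by
  refine ⟨hY, fun f g hf hg => ?_, fun f hf => ⟨M f, hconst _, ?_, ?_⟩⟩
  · exact (le_total (M g) (M f)).imp (⟨hf, hg, ·⟩) (⟨hg, hf, ·⟩)
  · exact ⟨hf, hconst _, (hM.map_const _).le⟩
  · exact ⟨hconst _, hf, (hM.map_const _).ge⟩

theorem deFinettiCoherent_previsionOrder (hM : IsLinearPrevision M) (hY : ∀ f ∈ Y, Bounded f) :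
    DeFinettiCoherent Y (previsionOrder Y M) := by
  rintro ⟨n, f, g, c, -, hf, hg, hc, hpref, hle, hstrict⟩
  have hsum (h : Fin n → Ω → ℝ) : (fun ω => ∑ i, c i * h i ω) = ∑ i, c i • h i := by
    ext ω
    simp only [Finset.sum_apply, Pi.smul_apply, smul_eq_mul]
  have hf_bdd : Bounded (∑ i, c i • f i) := Bounded.sum_smul (fun i => hY _ (hf i)) c
  have hg_bdd : Bounded (∑ i, c i • g i) := Bounded.sum_smul (fun i => hY _ (hg i)) c
  have hterm : ∀ i ∈ Finset.univ, c i * M (g i) ≤ c i * M (f i) := fun i _ =>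
    mul_le_mul_of_nonneg_left (hpref i).2.2 (hc i).le
  have hM_sum (h : Fin n → Ω → ℝ) : M (∑ i, c i • h i) = ∑ i, c i * M (h i) := by
    simp only [map_sum, map_smul, smul_eq_mul]
  have hM_le : M (∑ i, c i • g i) ≤ M (∑ i, c i • f i) := by
    simpa only [hM_sum] using Finset.sum_le_sum hterm
  have hM_ge : M (∑ i, c i • f i) ≤ M (∑ i, c i • g i) := by
    refine hM.mono hf_bdd hg_bdd ?_
    rw [← hsum, ← hsum]
    exact hle
  rcases hstrict with ⟨k, hk⟩ | hdom
  · have hM_eq : ∑ i, c i * M (g i) = ∑ i, c i * M (f i) := by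
      simpa only [hM_sum] using hM_le.antisymm hM_ge
    have hk_eq := (Finset.sum_eq_sum_iff_of_le hterm).1 hM_eq k (Finset.mem_univ k)
    exact hk ⟨hg k, hf k, (mul_left_cancel₀ (hc k).ne' hk_eq).ge⟩
  · rw [hsum, hsum] at hdom
    exact (hM.lt_of_uniformlyDominates hg_bdd hf_bdd hdom).not_ge hM_le

end PrevisionOrder

section CoherentPreference

variable {Ω : Type*}

/-- The convex cone generated by the differences `f - g` of gambles with `f ≿ g`: the
exchanges of gambles that coherence forbids to be surely losing. -/
def preferenceCone (pref : (Ω → ℝ) → (Ω → ℝ) → Prop) : PointedCone ℝ (Ω → ℝ) :=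
  PointedCone.hull ℝ {u | ∃ f g, pref f g ∧ u = f - g}

variable {X : Set (Ω → ℝ)} {pref : (Ω → ℝ) → (Ω → ℝ) → Prop}

theorem exists_sum_smul_sub_of_mem_preferenceCone {u : Ω → ℝ} (hu : u ∈ preferenceCone pref) :
    ∃ (n : ℕ) (f g : Fin n → Ω → ℝ) (c : Fin n → ℝ), (∀ i, 0 < c i) ∧
      (∀ i, pref (f i) (g i)) ∧ u = ∑ i, c i • (f i - g i) := by
  obtain ⟨a, ha_mem, ha_nonneg, rfl⟩ := PointedCone.mem_hull_set.1 hu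
  choose f g hfg hsub using fun v : a.support => ha_mem v.2
  let e := a.support.equivFin.symm
  refine ⟨_, f ∘ e, g ∘ e, fun i => a (e i), fun i => ?_, fun i => hfg (e i), ?_⟩
  · exact (ha_nonneg _).lt_of_ne' (Finsupp.mem_support_iff.1 (e i).2)
  · calc a.sum (fun v r => r • v) = ∑ v : a.support, a v • (v : Ω → ℝ) :=
          (Finset.sum_coe_sort a.support fun v => a v • v).symm
      _ = ∑ v : a.support, a v • (f v - g v) :=
          Finset.sum_congr rfl fun v _ => by rw [← hsub v]
      _ = ∑ i, a (e i) • (f (e i) - g (e i)) :=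
          (e.sum_comp fun v => a v • (f v - g v)).symm

theorem DeFinettiCoherent.not_uniformlyDominates_of_mem_preferenceCone [Nonempty Ω]
    (hcoh : DeFinettiCoherent X pref) (hprefX : ∀ f g, pref f g → f ∈ X ∧ g ∈ X)
    {u : Ω → ℝ} (hu : u ∈ preferenceCone pref) : ¬ UniformlyDominates 0 u := by
  rintro ⟨ε, hε, hle⟩
  obtain ⟨n, f, g, c, hc, hfg, rfl⟩ := exists_sum_smul_sub_of_mem_preferenceCone hu
  have hdom (ω : Ω) : ∑ i, c i * f i ω + ε ≤ ∑ i, c i * g i ω := by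
    have h : ∑ i, c i * f i ω - ∑ i, c i * g i ω + ε ≤ 0 := by
      simpa [mul_sub] using hle ω
    linarith
  have hn : 1 ≤ n := by
    by_contra! h0
    obtain rfl := Nat.lt_one_iff.1 h0
    have h := hdom (Classical.arbitrary Ω)
    simp only [Finset.univ_eq_empty, Finset.sum_empty, zero_add] at h
    exact h.not_gt hε
  exact hcoh ⟨n, f, g, c, hn, fun i => (hprefX _ _ (hfg i)).1, fun i => (hprefX _ _ (hfg i)).2,
    hc, hfg, fun ω => by linarith [hdom ω], Or.inr ⟨ε, hε, hdom⟩⟩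

theorem DeFinettiCoherent.exists_isLinearPrevision_monotone [Nonempty Ω]
    (hcoh : DeFinettiCoherent X pref) (hprefX : ∀ f g, pref f g → f ∈ X ∧ g ∈ X)
    (hX : ∀ f ∈ X, Bounded f) :
    ∃ M : (Ω → ℝ) →ₗ[ℝ] ℝ, IsLinearPrevision M ∧ ∀ f g, pref f g → M g ≤ M f := by
  obtain ⟨M, hM, hM_nonneg⟩ := exists_isLinearPrevision_nonneg_of_mem_cone (preferenceCone pref)
    fun _ hu => hcoh.not_uniformlyDominates_of_mem_preferenceCone hprefX hu
  refine ⟨M, hM, fun f g hfg => ?_⟩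
  have h := hM_nonneg (f - g) (PointedCone.subset_hull ⟨f, g, hfg, rfl⟩)
    ((hX f (hprefX f g hfg).1).sub (hX g (hprefX f g hfg).2))
  rwa [map_sub, sub_nonneg] at h

theorem DeFinettiCoherent.pref_symm_of_cycle (hcoh : DeFinettiCoherent X pref)
    (hprefX : ∀ f g, pref f g → f ∈ X ∧ g ∈ X) {f g h : Ω → ℝ}
    (hfg : pref f g) (hgh : pref g h) (hhf : pref h f) : pref g f := by
  by_contra hgf
  have hcycle (i : Fin 3) : pref (![f, g, h] i) (![g, h, f] i) := by
    fin_cases i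
    exacts [hfg, hgh, hhf]
  refine hcoh ⟨3, ![f, g, h], ![g, h, f], 1, by norm_num, fun i => (hprefX _ _ (hcycle i)).1,
    fun i => (hprefX _ _ (hcycle i)).2, fun _ => one_pos, hcycle, fun ω => le_of_eq ?_,
    Or.inl ⟨0, hgf⟩⟩
  simp only [Fin.sum_univ_three, Pi.one_apply, one_mul, Matrix.cons_val]
  ring

theorem DeFinettiCoherent.pref_symm_of_prevision_le (hcoh : DeFinettiCoherent X pref)
    (hprefX : ∀ f g, pref f g → f ∈ X ∧ g ∈ X)
    (hprice : ∀ f ∈ X, ∃ p : ℝ, pref f (fun _ => p) ∧ pref (fun _ => p) f)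
    {M : (Ω → ℝ) →ₗ[ℝ] ℝ} (hM : IsLinearPrevision M) (hmono : ∀ f g, pref f g → M g ≤ M f)
    {f g : Ω → ℝ} (hfg : pref f g) (hle : M f ≤ M g) : pref g f := by
  have hprevision (h : Ω → ℝ) (hX : h ∈ X) :
      pref h (fun _ => M h) ∧ pref (fun _ => M h) h := by
    obtain ⟨p, hhp, hph⟩ := hprice h hX
    have hp : M h = p := by
      rw [← hM.map_const p]
      exact (hmono _ _ hph).antisymm (hmono _ _ hhp)
    exact hp ▸ ⟨hhp, hph⟩
  obtain ⟨hf, hg⟩ := hprefX f g hfg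
  have hM_eq : M f = M g := hle.antisymm (hmono f g hfg)
  exact hcoh.pref_symm_of_cycle hprefX hfg (hprevision g hg).1 (hM_eq ▸ (hprevision f hf).2)

end CoherentPreference

theorem deFinetti_coherent_extension_general {Ω : Type*} [Nonempty Ω]
    (X Y : Set (Ω → ℝ))
    (pref : (Ω → ℝ) → (Ω → ℝ) → Prop)
    (hprefX : ∀ f g, pref f g → f ∈ X ∧ g ∈ X)
    (hprice : ∀ f ∈ X, ∃ p : ℝ, pref f (fun _ => p) ∧ pref (fun _ => p) f)
    (hconst : ∀ c : ℝ, (fun _ => c) ∈ Y)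
    (hcoh : DeFinettiCoherent X pref)
    (hXY : X ⊆ Y) (hYbdd : ∀ f ∈ Y, Bounded f) :
    ∃ pref' : (Ω → ℝ) → (Ω → ℝ) → Prop,
      (∀ f g, pref' f g → f ∈ Y ∧ g ∈ Y) ∧
      IsComparativePrevisionSystem Y pref' ∧
      DeFinettiCoherent Y pref' ∧
      (∀ f g, pref f g → pref' f g) ∧
      (∀ f g, pref f g → ¬ pref g f → ¬ pref' g f) := by
  obtain ⟨M, hM, hmono⟩ :=
    hcoh.exists_isLinearPrevision_monotone hprefX fun f hf => hYbdd f (hXY hf)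
  refine ⟨previsionOrder Y M, fun f g h => ⟨h.1, h.2.1⟩,
    isComparativePrevisionSystem_previsionOrder hM hYbdd hconst,
    deFinettiCoherent_previsionOrder hM hYbdd, fun f g hfg => ?_, fun f g hfg hgf hle => ?_⟩
  · exact ⟨hXY (hprefX f g hfg).1, hXY (hprefX f g hfg).2, hmono f g hfg⟩
  · exact hgf (hcoh.pref_symm_of_prevision_le hprefX hprice hM hmono hfg hle.2.2)

/-- A de Finetti coherent comparative prevision system containing all constant gambles
extends to a de Finetti coherent comparative prevision system on any larger family of
bounded gambles. -/
theorem deFinetti_coherent_extension {Ω : Type*} [Nonempty Ω]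
    (X Y : Set (Ω → ℝ))
    (pref : (Ω → ℝ) → (Ω → ℝ) → Prop)
    (hprefX : ∀ f g, pref f g → f ∈ X ∧ g ∈ X)
    (hconst : ∀ c : ℝ, (fun _ => c) ∈ X)
    (hCPS : IsComparativePrevisionSystem X pref)
    (hcoh : DeFinettiCoherent X pref)
    (hXY : X ⊆ Y) (hYbdd : ∀ f ∈ Y, Bounded f) :
    ∃ pref' : (Ω → ℝ) → (Ω → ℝ) → Prop,
      (∀ f g, pref' f g → f ∈ Y ∧ g ∈ Y) ∧
      IsComparativePrevisionSystem Y pref' ∧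
      DeFinettiCoherent Y pref' ∧
      (∀ f g, pref f g → pref' f g) ∧
      (∀ f g, pref f g → ¬ pref g f → ¬ pref' g f) := by
  have hprice (f : Ω → ℝ) (hf : f ∈ X) : ∃ p : ℝ, pref f (fun _ => p) ∧ pref (fun _ => p) f :=
    (hCPS.2.2 f hf).imp fun _ hp => hp.2
  exact deFinetti_coherent_extension_general X Y pref hprefX hprice (fun c => hXY (hconst c))
    hcoh hXY hYbdd
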